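/- arXiv:2602.23450 — 9 statements merged into one kernel-verified Lean document; each statement's English description precedes it below -/
import Mathlib

section
/- Let K_1, K_2, K_3 be invertible 3×3 complex matrices, R_1, R_2, R_3 complex rotations, c_1, c_2, c_3 ∈ ℂ³, with fundamental matrices F_ij = (K_i)⁻ᵀ * R_i * [c_j − c_i]_× * (R_j)ᵀ * (K_j)⁻¹ and epipoles e_ij := K_i * R_i *ᵥ (c_j − c_i). Then the three triangulation conditions hold: e_13 ⬝ᵥ (F_12.mulVec e_23) = 0, e_12 ⬝ᵥ (F_13.mulVec e_32) = 0, and e_21 ⬝ᵥ (F_23.mulVec e_31) = 0. -/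
open Matrix

/-- The skew-symmetric "hat" matrix `[c]ₓ` of `c ∈ ℂ³`, so that `[c]ₓ v = c × v`. -/
def crossMat (c : Fin 3 → ℂ) : Matrix (Fin 3) (Fin 3) ℂ :=
  !![0, -c 2, c 1; c 2, 0, -c 0; -c 1, c 0, 0]

/-!
Put `A i = K i * R i`. As `R i` is orthogonal, `F i j = (A i)⁻ᵀ [c j - c i]ₓ (A j)⁻¹`, while the
epipoles are `e i k = A i (c k - c i)`. The matrices `A` therefore cancel from
`e i k ⬝ᵥ F i j e j k`, leaving the triple product of `c k - c i`, `c j - c i` and `c k - c j`.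
It vanishes because these are the sides of a triangle, hence linearly dependent.
-/

section CommRing

variable {S m n : Type*} [CommRing S] [Fintype m] [DecidableEq m] [Fintype n] [DecidableEq n]

theorem dotProduct_cross_sub_self (u v : Fin 3 → S) : u ⬝ᵥ v ⨯₃ (u - v) = 0 := by
  rw [map_sub, cross_self, sub_zero, dot_cross_self]

theorem mulVec_dotProduct_inv_transpose_mul_mul_inv_mulVec
    {A : Matrix m m S} {B : Matrix n n S} (hA : IsUnit A.det) (hB : IsUnit B.det)
    (M : Matrix m n S) (u : m → S) (v : n → S) :
    (A *ᵥ u) ⬝ᵥ ((A⁻¹ᵀ * M * B⁻¹) *ᵥ (B *ᵥ v)) = u ⬝ᵥ (M *ᵥ v) := by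
  rw [mulVec_mulVec, nonsing_inv_mul_cancel_right B _ hB, ← mulVec_mulVec, dotProduct_mulVec,
    vecMul_transpose, mulVec_mulVec, nonsing_inv_mul A hA, one_mulVec]

theorem mul_inv_eq_transpose_mul_inv {R : Matrix n n S} (hR : R * Rᵀ = 1) (K : Matrix n n S) :
    (K * R)⁻¹ = Rᵀ * K⁻¹ := by
  rw [Matrix.mul_inv_rev, inv_eq_right_inv hR]

end CommRing

theorem crossMat_mulVec (a v : Fin 3 → ℂ) : crossMat a *ᵥ v = a ⨯₃ v := by
  ext i
  fin_cases i <;> simp [crossMat, cross_apply, mulVec, dotProduct, Fin.sum_univ_three] <;> ring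

theorem dotProduct_crossMat_sub_mulVec_sub (p q r : Fin 3 → ℂ) :
    (r - p) ⬝ᵥ (crossMat (q - p) *ᵥ (r - q)) = 0 := by
  rw [crossMat_mulVec, ← sub_sub_sub_cancel_right r q p, dotProduct_cross_sub_self]

theorem stmt2_general {ι : Type*} (K R : ι → Matrix (Fin 3) (Fin 3) ℂ) (c : ι → Fin 3 → ℂ)
    (hK : ∀ i, IsUnit (K i).det) (hR : ∀ i, R i * (R i)ᵀ = 1)
    (F : ι → ι → Matrix (Fin 3) (Fin 3) ℂ)
    (hF : ∀ i j, F i j = ((K i)⁻¹)ᵀ * R i * crossMat (c j - c i) * (R j)ᵀ * (K j)⁻¹)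
    (e : ι → ι → Fin 3 → ℂ) (he : ∀ i j, e i j = (K i * R i) *ᵥ (c j - c i)) (i j k : ι) :
    e i k ⬝ᵥ (F i j *ᵥ e j k) = 0 := by
  have isUnit_det_KR (l : ι) : IsUnit (K l * R l).det := by
    rw [det_mul]
    exact (hK l).mul (isUnit_det_of_right_inverse (hR l))
  have F_eq : F i j = (K i * R i)⁻¹ᵀ * crossMat (c j - c i) * (K j * R j)⁻¹ := by
    rw [hF, mul_inv_eq_transpose_mul_inv (hR i), mul_inv_eq_transpose_mul_inv (hR j),
      transpose_mul, transpose_transpose, ← Matrix.mul_assoc]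
  rw [he, he, F_eq, mulVec_dotProduct_inv_transpose_mul_mul_inv_mulVec (isUnit_det_KR i)
    (isUnit_det_KR j), dotProduct_crossMat_sub_mulVec_sub]

/-- The triangulation conditions hold for any compatible fundamental matrix triple.
Indices are 0-based: camera `i+1` of the paper is camera `i` here. -/
theorem stmt2 (K R : Fin 3 → Matrix (Fin 3) (Fin 3) ℂ) (c : Fin 3 → Fin 3 → ℂ)
    (hK : ∀ i, IsUnit (K i).det)
    (hR : ∀ i, R i * (R i)ᵀ = 1) (hdR : ∀ i, (R i).det = 1)
    (F : Fin 3 → Fin 3 → Matrix (Fin 3) (Fin 3) ℂ)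
    (hF : ∀ i j, F i j = ((K i)⁻¹)ᵀ * R i * crossMat (c j - c i) * (R j)ᵀ * (K j)⁻¹)
    (e : Fin 3 → Fin 3 → Fin 3 → ℂ)
    (he : ∀ i j, e i j = (K i * R i) *ᵥ (c j - c i)) :
    e 0 2 ⬝ᵥ (F 0 1 *ᵥ e 1 2) = 0 ∧
    e 0 1 ⬝ᵥ (F 0 2 *ᵥ e 2 1) = 0 ∧
    e 1 0 ⬝ᵥ (F 1 2 *ᵥ e 2 0) = 0 := by
  have triangulation := stmt2_general K R c hK hR F hF e he
  exact ⟨triangulation 0 1 2, triangulation 0 2 1, triangulation 1 2 0⟩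
end

section
/- Let K, K' be invertible 3×3 complex matrices, R, R' complex rotations, c, c' ∈ ℂ³, and let F = K⁻ᵀ * R * [c' − c]_× * (R')ᵀ * (K')⁻¹. Then the adjugate of F is the rank-one matrix adj(F) = (det K * det K')⁻¹ • (K' * R' * vecMulVec (c' − c) (c' − c) * Rᵀ * Kᵀ), where vecMulVec a a denotes the outer product a * aᵀ. -/
open Matrix

theorem adjugate_crossMat (a : Fin 3 → ℂ) : (crossMat a).adjugate = vecMulVec a a := by
  rw [crossMat, adjugate_fin_three_of]
  ext i j
  fin_cases i <;> fin_cases j <;> simp [vecMulVec_apply] <;> ring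

section Adjugate

variable {n α : Type*} [Fintype n] [DecidableEq n] [CommRing α] {A B : Matrix n n α}

theorem adjugate_eq_det_smul_of_mul_eq_one (h : A * B = 1) : A.adjugate = A.det • B :=
  calc A.adjugate = A.adjugate * A * B := by rw [Matrix.mul_assoc, h, Matrix.mul_one]
    _ = A.det • B := by rw [adjugate_mul, Matrix.smul_mul, Matrix.one_mul]

theorem adjugate_nonsing_inv (h : IsUnit A.det) : A⁻¹.adjugate = Ring.inverse A.det • A := by
  rw [adjugate_eq_det_smul_of_mul_eq_one (nonsing_inv_mul A h), det_nonsing_inv]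

theorem adjugate_eq_transpose_of_mul_transpose_eq_one (h : A * Aᵀ = 1) (hdet : A.det = 1) :
    A.adjugate = Aᵀ := by
  rw [adjugate_eq_det_smul_of_mul_eq_one h, hdet, one_smul]

end Adjugate

/-- The adjugate of a fundamental matrix is the stated rank-one matrix. -/
theorem stmt3 (K K' R R' : Matrix (Fin 3) (Fin 3) ℂ)
    (hK : IsUnit K.det) (hK' : IsUnit K'.det)
    (hR : R * Rᵀ = 1) (hdR : R.det = 1)
    (hR' : R' * R'ᵀ = 1) (hdR' : R'.det = 1)
    (c c' : Fin 3 → ℂ)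
    (F : Matrix (Fin 3) (Fin 3) ℂ)
    (hF : F = (K⁻¹)ᵀ * R * crossMat (c' - c) * R'ᵀ * K'⁻¹) :
    F.adjugate =
      (K.det * K'.det)⁻¹ • (K' * R' * vecMulVec (c' - c) (c' - c) * Rᵀ * Kᵀ) := by
  have adjugate_R : R.adjugate = Rᵀ := adjugate_eq_transpose_of_mul_transpose_eq_one hR hdR
  have adjugate_R'_transpose : R'ᵀ.adjugate = R' := by
    rw [← adjugate_transpose, adjugate_eq_transpose_of_mul_transpose_eq_one hR' hdR',
      transpose_transpose]
  have adjugate_K_inv_transpose : (K⁻¹)ᵀ.adjugate = K.det⁻¹ • Kᵀ := by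
    rw [← adjugate_transpose, adjugate_nonsing_inv hK, Ring.inverse_eq_inv', transpose_smul]
  have adjugate_K'_inv : K'⁻¹.adjugate = K'.det⁻¹ • K' := by
    rw [adjugate_nonsing_inv hK', Ring.inverse_eq_inv']
  calc F.adjugate
      = K'⁻¹.adjugate * (R'ᵀ.adjugate * ((crossMat (c' - c)).adjugate *
          (R.adjugate * (K⁻¹)ᵀ.adjugate))) := by
        simp only [hF, adjugate_mul_distrib]
    _ = (K'.det⁻¹ • K') * (R' * (vecMulVec (c' - c) (c' - c) * (Rᵀ * (K.det⁻¹ • Kᵀ)))) := by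
        rw [adjugate_K'_inv, adjugate_R'_transpose, adjugate_crossMat, adjugate_R,
          adjugate_K_inv_transpose]
    _ = (K.det * K'.det)⁻¹ • (K' * R' * vecMulVec (c' - c) (c' - c) * Rᵀ * Kᵀ) := by
        simp only [Matrix.smul_mul, Matrix.mul_smul, smul_smul, Matrix.mul_assoc, mul_inv]
end

section
/- Let K_1, K_2, K_3 be invertible 3×3 complex matrices, R_1, R_2, R_3 complex rotations, c_1, c_2, c_3 ∈ ℂ³, with fundamental matrices F_ij = (K_i)⁻ᵀ * R_i * [c_j − c_i]_× * (R_j)ᵀ * (K_j)⁻¹ for i ≠ j (so F_ji = (F_ij)ᵀ). Then the three quartic matrix constraints hold: F_12 * adj(F_32) * F_31 = F_13 * adj(F_23) * F_21, F_31 * adj(F_21) * F_23 = F_32 * adj(F_12) * F_13, and F_21 * adj(F_31) * F_32 = F_23 * adj(F_13) * F_12. Equivalently, for every permutation (i,j,k) of (1,2,3) the matrix F_ij * adj(F_kj) * F_ki is symmetric. -/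
open Matrix

/-!
Write `F_ij = A_i [c_j - c_i]ₓ A_jᵀ` with `A_i = K_i⁻ᵀ R_i`. In `F_ij adj(F_kj) F_ki` the inner
factors `A_j` and `A_k` cancel against their adjugates up to determinants. Since `adj [v]ₓ = v vᵀ`,
what remains between `A_i` and `A_iᵀ` is, with `v = c_j - c_k` and `w = c_i - c_k`,
`[v - w]ₓ v vᵀ [w]ₓ = n nᵀ` for `n = v × w`. Hence `F_ij adj(F_kj) F_ki` is a multiple of the
symmetric matrix `(A_i n) (A_i n)ᵀ`.
-/

section CrossMatrix

variable {S : Type*} [CommRing S]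

/-- The matrix of `w ↦ v × w` over a commutative ring; over `ℂ` it is `crossMat`. -/
def crossMatrix (v : Fin 3 → S) : Matrix (Fin 3) (Fin 3) S :=
  !![0, -v 2, v 1; v 2, 0, -v 0; -v 1, v 0, 0]

theorem crossMat_eq_crossMatrix (v : Fin 3 → ℂ) : crossMat v = crossMatrix v := rfl

theorem crossMatrix_mulVec (v w : Fin 3 → S) : crossMatrix v *ᵥ w = v ⨯₃ w := by
  ext i
  fin_cases i <;> simp [crossMatrix, cross_apply, mulVec_eq_sum, Fin.sum_univ_three] <;> ring

theorem transpose_crossMatrix (v : Fin 3 → S) : (crossMatrix v)ᵀ = crossMatrix (-v) := by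
  ext i j
  fin_cases i <;> fin_cases j <;> simp [crossMatrix]

theorem vecMul_crossMatrix (v w : Fin 3 → S) : v ᵥ* crossMatrix w = v ⨯₃ w := by
  rw [← mulVec_transpose, transpose_crossMatrix, crossMatrix_mulVec, map_neg, LinearMap.neg_apply,
    cross_anticomm]

theorem adjugate_crossMatrix (v : Fin 3 → S) : (crossMatrix v).adjugate = vecMulVec v v := by
  ext i j
  fin_cases i <;> fin_cases j <;>
    simp [crossMatrix, adjugate_fin_three_of, vecMulVec_apply] <;> ring

theorem crossMatrix_mul_adjugate_mul_crossMatrix (u v w : Fin 3 → S) :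
    crossMatrix u * (crossMatrix v).adjugate * crossMatrix w =
      vecMulVec (u ⨯₃ v) (v ⨯₃ w) := by
  rw [adjugate_crossMatrix, mul_vecMulVec, vecMulVec_mul, crossMatrix_mulVec, vecMul_crossMatrix]

theorem sub_cross_left_self (v w : Fin 3 → S) : (v - w) ⨯₃ v = v ⨯₃ w := by
  rw [map_sub, LinearMap.sub_apply, cross_self, zero_sub, cross_anticomm]

end CrossMatrix

theorem mul_mul_transpose_mul_adjugate_mul {n S : Type*} [Fintype n] [DecidableEq n] [CommRing S]
    (A B D X Y Z : Matrix n n S) :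
    (A * X * Bᵀ) * (D * Y * Bᵀ).adjugate * (D * Z * Aᵀ) =
      (B.det * D.det) • (A * (X * Y.adjugate * Z) * Aᵀ) :=
  calc (A * X * Bᵀ) * (D * Y * Bᵀ).adjugate * (D * Z * Aᵀ)
    _ = A * X * (Bᵀ * Bᵀ.adjugate) * Y.adjugate * (D.adjugate * D) * Z * Aᵀ := by
      simp only [adjugate_mul_distrib, Matrix.mul_assoc]
    _ = (B.det * D.det) • (A * (X * Y.adjugate * Z) * Aᵀ) := by
      rw [mul_adjugate, adjugate_mul, det_transpose]
      simp [Matrix.mul_assoc, smul_smul, mul_comm]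

section FundamentalMatrix

variable {ι S : Type*} [CommRing S]

/-- The fundamental matrix of cameras `i` and `j` with centers `c i`, `c j`. The matrix
`A i` combines calibration and orientation: it is `K_i⁻ᵀ R_i` in the notation of the paper. -/
def fundamentalMatrix (A : ι → Matrix (Fin 3) (Fin 3) S) (c : ι → Fin 3 → S) (i j : ι) :
    Matrix (Fin 3) (Fin 3) S :=
  A i * crossMatrix (c j - c i) * (A j)ᵀ

variable (A : ι → Matrix (Fin 3) (Fin 3) S) (c : ι → Fin 3 → S)

theorem transpose_fundamentalMatrix (i j : ι) :
    (fundamentalMatrix A c i j)ᵀ = fundamentalMatrix A c j i := by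
  simp only [fundamentalMatrix, transpose_mul, transpose_transpose, transpose_crossMatrix, neg_sub,
    Matrix.mul_assoc]

theorem fundamentalMatrix_mul_adjugate_mul (i j k : ι) :
    fundamentalMatrix A c i j * (fundamentalMatrix A c k j).adjugate * fundamentalMatrix A c k i =
      ((A j).det * (A k).det) •
        vecMulVec (A i *ᵥ ((c j - c k) ⨯₃ (c i - c k))) (A i *ᵥ ((c j - c k) ⨯₃ (c i - c k))) := by
  have baseline : c j - c i = (c j - c k) - (c i - c k) := (sub_sub_sub_cancel_right ..).symm
  simp only [fundamentalMatrix]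
  rw [mul_mul_transpose_mul_adjugate_mul, crossMatrix_mul_adjugate_mul_crossMatrix, baseline,
    sub_cross_left_self, mul_vecMulVec, vecMulVec_mul, vecMul_transpose]

theorem isSymm_fundamentalMatrix_mul_adjugate_mul (i j k : ι) :
    (fundamentalMatrix A c i j * (fundamentalMatrix A c k j).adjugate *
      fundamentalMatrix A c k i).IsSymm := by
  rw [fundamentalMatrix_mul_adjugate_mul]
  exact IsSymm.smul (transpose_vecMulVec _ _) _

theorem stmt5_general (F : ι → ι → Matrix (Fin 3) (Fin 3) S)
    (hF : ∀ i j, F i j = A i * crossMatrix (c j - c i) * (A j)ᵀ) (i j k : ι) :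
    F i j * (F k j).adjugate * F k i = F i k * (F j k).adjugate * F j i ∧
      (F i j * (F k j).adjugate * F k i)ᵀ = F i j * (F k j).adjugate * F k i := by
  obtain rfl : F = fundamentalMatrix A c := funext₂ hF
  have symm := (isSymm_fundamentalMatrix_mul_adjugate_mul A c i j k).eq
  refine ⟨?_, symm⟩
  rw [← symm]
  simp only [transpose_mul, adjugate_transpose, transpose_fundamentalMatrix, Matrix.mul_assoc]

end FundamentalMatrix

/-- The new quartic constraints (3.1)/(3.2) hold on compatible fundamental matrix
triples, and equivalently `F_ij ⬝ adj(F_kj) ⬝ F_ki` is symmetric for every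
permutation `(i,j,k)` of the three cameras.
Indices are 0-based: camera `i+1` of the paper is camera `i` here. -/
theorem stmt5 (K R : Fin 3 → Matrix (Fin 3) (Fin 3) ℂ) (c : Fin 3 → Fin 3 → ℂ)
    (hK : ∀ i, IsUnit (K i).det)
    (hR : ∀ i, R i * (R i)ᵀ = 1) (hdR : ∀ i, (R i).det = 1)
    (F : Fin 3 → Fin 3 → Matrix (Fin 3) (Fin 3) ℂ)
    (hF : ∀ i j, F i j = ((K i)⁻¹)ᵀ * R i * crossMat (c j - c i) * (R j)ᵀ * (K j)⁻¹) :
    (F 0 1 * (F 2 1).adjugate * F 2 0 = F 0 2 * (F 1 2).adjugate * F 1 0) ∧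
    (F 2 0 * (F 1 0).adjugate * F 1 2 = F 2 1 * (F 0 1).adjugate * F 0 2) ∧
    (F 1 0 * (F 2 0).adjugate * F 2 1 = F 1 2 * (F 0 2).adjugate * F 0 1) ∧
    (∀ i j k : Fin 3, i ≠ j → j ≠ k → i ≠ k →
      (F i j * (F k j).adjugate * F k i)ᵀ = F i j * (F k j).adjugate * F k i) := by
  have quartic := stmt5_general (fun i => ((K i)⁻¹)ᵀ * R i) c F fun i j => by
    simp only [hF, crossMat_eq_crossMatrix, transpose_mul, transpose_transpose, Matrix.mul_assoc]
  exact ⟨(quartic 0 1 2).1, (quartic 2 0 1).1, (quartic 1 0 2).1,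
    fun i j k _ _ _ => (quartic i j k).2⟩
end

section
/- Let K_1, K_2, K_3 be invertible 3×3 complex matrices, R_1, R_2, R_3 complex rotations, c_1, c_2, c_3 ∈ ℂ³, and u_ij = u_ji ∈ ℂ arbitrary scalars. Let F be the 9×9 complex matrix, indexed by (Fin 3) × (Fin 3), whose 3×3 block in position (i,j) is u_ij • ((K_i)⁻ᵀ * R_i * [c_j − c_i]_× * (R_j)ᵀ * (K_j)⁻¹) for i ≠ j, and whose diagonal blocks are zero. Then F has rank at most 6. -/
open Matrix

/-!
Coplanar centers share a normal `n ≠ 0`, and each baseline `w = c j - c i`, being orthogonal to `n`,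
has the form `n × f`, for which `[w]ₓ = f nᵀ - n fᵀ`. After multiplication by the camera matrices
`P i` on the left and `(P j)ᵀ` on the right, the first summand has all its rows proportional to
`P j n` and the second all its columns proportional to `P i n`, whatever the other camera is. Each
summand therefore contributes at most one dimension per camera to the rank of the block matrix, and
three centers are always coplanar.
-/

section BlockMatrix

variable {ι κ m n R : Type*} [Fintype ι] [Fintype κ] [Fintype n]
variable [CommSemiring R] [StrongRankCondition R]

theorem rank_mul_add_mul_le (A : Matrix m ι R) (B : Matrix ι n R) (C : Matrix m κ R)
    (D : Matrix κ n R) : (A * B + C * D).rank ≤ Fintype.card ι + Fintype.card κ := by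
  rw [← fromCols_mul_fromRows, ← Fintype.card_sum]
  exact (rank_mul_le_left _ _).trans (rank_le_card_width _)

theorem rank_comp_vecMulVec_add_vecMulVec_le (a : ι → m → R) (x : ι → κ → n → R)
    (y : ι → κ → m → R) (b : κ → n → R) :
    (comp ι κ m n R (of fun i j ↦ vecMulVec (a i) (x i j) + vecMulVec (y i j) (b j))).rank ≤
      Fintype.card ι + Fintype.card κ := by
  classical
  let A : Matrix (ι × m) ι R := of fun p i ↦ if p.1 = i then a i p.2 else 0
  let X : Matrix ι (κ × n) R := of fun i q ↦ x i q.1 q.2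
  let Y : Matrix (ι × m) κ R := of fun p j ↦ y p.1 j p.2
  let B : Matrix κ (κ × n) R := of fun j q ↦ if j = q.1 then b j q.2 else 0
  have factorization :
      comp ι κ m n R (of fun i j ↦ vecMulVec (a i) (x i j) + vecMulVec (y i j) (b j)) =
        A * X + Y * B := by
    ext p q
    simp [A, X, Y, B, mul_apply, vecMulVec_apply]
  rw [factorization]
  exact rank_mul_add_mul_le A X Y B

end BlockMatrix

section Normal

variable {k : Type*} [Field k]

theorem exists_dotProduct_eq_one {m : Type*} [Fintype m] {n : m → k} (hn : n ≠ 0) :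
    ∃ g, n ⬝ᵥ g = 1 := by
  classical
  obtain ⟨i, hi⟩ := Function.ne_iff.mp hn
  exact ⟨Pi.single i (n i)⁻¹, by simpa using mul_inv_cancel₀ hi⟩

theorem exists_crossProduct_eq_of_dotProduct_eq_zero {n w : Fin 3 → k} (hn : n ≠ 0)
    (h : n ⬝ᵥ w = 0) : ∃ f, n ⨯₃ f = w := by
  obtain ⟨g, hg⟩ := exists_dotProduct_eq_one hn
  refine ⟨w ⨯₃ g, ?_⟩
  rw [cross_cross_eq_smul_sub_smul', hg, dotProduct_comm w, h, one_smul, zero_smul, sub_zero]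

theorem exists_ne_zero_forall_dotProduct_eq_zero {m : Type*} [Fintype m]
    {V : Submodule k (m → k)} (hV : V < ⊤) : ∃ n ≠ 0, ∀ v ∈ V, n ⬝ᵥ v = 0 := by
  classical
  obtain ⟨φ, hφ, hVφ⟩ := V.exists_le_ker_of_lt_top hV
  refine ⟨(dotProductEquiv k m).symm φ, by simpa using hφ, fun v hv ↦ ?_⟩
  exact (LinearMap.congr_fun ((dotProductEquiv k m).apply_symm_apply φ) v).trans (hVφ hv)

theorem exists_normal_of_coplanar {s : Set (Fin 3 → k)} (hs : Coplanar k s) :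
    ∃ n ≠ 0, ∀ p ∈ s, ∀ q ∈ s, n ⬝ᵥ (q - p) = 0 := by
  have span_lt_top : vectorSpan k s < ⊤ := by
    apply Submodule.lt_top_of_finrank_lt_finrank
    rw [Module.finrank_fin_fun]
    exact Nat.lt_succ_of_le hs.finrank_le_two
  obtain ⟨n, hn, hns⟩ := exists_ne_zero_forall_dotProduct_eq_zero span_lt_top
  exact ⟨n, hn, fun p hp q hq ↦ hns _ (vsub_mem_vectorSpan k hq hp)⟩

theorem coplanar_range_fin_three {V P : Type*} [AddCommGroup V] [Module k V] [AddTorsor V P]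
    (c : Fin 3 → P) : Coplanar k (Set.range c) := by
  have range_eq : Set.range c = {c 0, c 1, c 2} := by
    ext p
    simp [Fin.exists_fin_succ, eq_comm]
  exact range_eq ▸ coplanar_triple k (c 0) (c 1) (c 2)

end Normal

theorem crossMat_zero : crossMat 0 = 0 := by
  ext i j
  fin_cases i <;> fin_cases j <;> simp [crossMat]

theorem crossMat_crossProduct (n f : Fin 3 → ℂ) :
    crossMat (n ⨯₃ f) = vecMulVec f n - vecMulVec n f := by
  ext i j
  fin_cases i <;> fin_cases j <;> simp [crossMat, cross_apply, vecMulVec_apply] <;> ring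

theorem mul_crossMat_crossProduct_mul_transpose {m m' : Type*} (P : Matrix m (Fin 3) ℂ)
    (Q : Matrix m' (Fin 3) ℂ) (n f : Fin 3 → ℂ) :
    P * crossMat (n ⨯₃ f) * Qᵀ =
      vecMulVec (P *ᵥ f) (Q *ᵥ n) - vecMulVec (P *ᵥ n) (Q *ᵥ f) := by
  simp only [crossMat_crossProduct, Matrix.mul_sub, Matrix.sub_mul, mul_vecMulVec, vecMulVec_mul,
    vecMul_transpose]

/-- The block matrix of the scaled fundamental matrices `u i j • (P i [c j - c i]ₓ (P j)ᵀ)` of a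
family of cameras with centers `c i`, where `P i` stands for `K_i⁻ᵀ R_i`. Its diagonal blocks vanish
because `[0]ₓ = 0`. -/
def fundamentalBlockMatrix {ι m : Type*} (P : ι → Matrix m (Fin 3) ℂ) (c : ι → Fin 3 → ℂ)
    (u : ι → ι → ℂ) : Matrix (ι × m) (ι × m) ℂ :=
  comp ι ι m m ℂ (of fun i j ↦ u i j • (P i * crossMat (c j - c i) * (P j)ᵀ))

theorem fundamentalBlockMatrix_apply {ι m : Type*} [DecidableEq ι] (P : ι → Matrix m (Fin 3) ℂ)
    (c : ι → Fin 3 → ℂ) (u : ι → ι → ℂ) (p q : ι × m) :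
    fundamentalBlockMatrix P c u p q = if p.1 = q.1 then 0 else
      (u p.1 q.1 • (P p.1 * crossMat (c q.1 - c p.1) * (P q.1)ᵀ)) p.2 q.2 := by
  split_ifs with h
  · simp [fundamentalBlockMatrix, h, crossMat_zero]
  · rfl

theorem stmt6_general {ι m : Type*} [Fintype ι] [Fintype m] (P : ι → Matrix m (Fin 3) ℂ)
    {c : ι → Fin 3 → ℂ} (hc : Coplanar ℂ (Set.range c)) (u : ι → ι → ℂ) :
    (fundamentalBlockMatrix P c u).rank ≤ 2 * Fintype.card ι := by
  obtain ⟨n, hn, hnc⟩ := exists_normal_of_coplanar hc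
  choose f hf using fun i j ↦
    exists_crossProduct_eq_of_dotProduct_eq_zero hn (hnc _ ⟨i, rfl⟩ _ ⟨j, rfl⟩)
  have block_eq (i j : ι) : u i j • (P i * crossMat (c j - c i) * (P j)ᵀ) =
      vecMulVec (P i *ᵥ n) (-u i j • (P j *ᵥ f i j)) +
        vecMulVec (u i j • (P i *ᵥ f i j)) (P j *ᵥ n) := by
    rw [← hf, mul_crossMat_crossProduct_mul_transpose, vecMulVec_smul, smul_vecMulVec, smul_sub,
      neg_smul, neg_add_eq_sub]
  simp only [fundamentalBlockMatrix, block_eq, two_mul]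
  exact rank_comp_vecMulVec_add_vecMulVec_le _ _ _ _

/-- Proposition 2.2 (Sengupta et al.): the 9×9 block matrix of arbitrarily scaled
fundamental matrices of a camera triple has rank at most 6.
Indices are 0-based: camera `i+1` of the paper is camera `i` here. -/
theorem stmt6 (K R : Fin 3 → Matrix (Fin 3) (Fin 3) ℂ) (c : Fin 3 → Fin 3 → ℂ)
    (hK : ∀ i, IsUnit (K i).det)
    (hR : ∀ i, R i * (R i)ᵀ = 1) (hdR : ∀ i, (R i).det = 1)
    (u : Fin 3 → Fin 3 → ℂ) (hu : ∀ i j, u i j = u j i)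
    (F : Matrix (Fin 3 × Fin 3) (Fin 3 × Fin 3) ℂ)
    (hF : ∀ p q, F p q =
      if p.1 = q.1 then 0 else
        (u p.1 q.1 •
          (((K p.1)⁻¹)ᵀ * R p.1 * crossMat (c q.1 - c p.1) * (R q.1)ᵀ * (K q.1)⁻¹))
          p.2 q.2) :
    F.rank ≤ 6 := by
  have F_eq : F = fundamentalBlockMatrix (fun i ↦ ((K i)⁻¹)ᵀ * R i) c u := by
    ext p q
    simp only [hF, fundamentalBlockMatrix_apply, transpose_mul, transpose_transpose,
      Matrix.mul_assoc]
  simpa [F_eq] using stmt6_general (fun i ↦ ((K i)⁻¹)ᵀ * R i) (coplanar_range_fin_three c) u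
end

section
/- Let c_1, c_2, c_3 ∈ ℂ³ and u_ij = u_ji ∈ ℂ be arbitrary scalars, and let M be the 9×9 complex matrix, indexed by (Fin 3) × (Fin 3), whose (i,j) block is u_ij • [c_j − c_i]_× (diagonal blocks are automatically zero). Then the three vectors of ℂ⁹ written in blocks as v₁ = (u_23 • (c_2 − c_1), u_13 • (c_1 − c_2), 0), v₂ = (u_23 • (c_3 − c_1), 0, u_12 • (c_1 − c_3)), v₃ = (0, u_13 • (c_3 − c_2), u_12 • (c_2 − c_3)) satisfy M.mulVec v₁ = 0, M.mulVec v₂ = 0, and M.mulVec v₃ = 0. -/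
open Matrix

/-!
For `w` with block `α • (c b - c a)` at `a`, block `β • (c a - c b)` at `b` and zero elsewhere, the
two cross products contributing to block `i` of the image are opposite up to their scalars, because
`c a - c i` and `c b - c i` differ by `c b - c a`. Hence block `i` equals
`(u i a * α - u i b * β) • (c a - c i) ⨯₃ (c b - c a)`. The cross product vanishes for `i = a` and
`i = b`; for the third camera `i` the scalar vanishes by symmetry of `u` when
`α = u b i` and `β = u a i`.
-/

theorem crossMat_eq_toMatrix'_crossProduct (c : Fin 3 → ℂ) :
    crossMat c = LinearMap.toMatrix' (crossProduct c) := by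
  ext i j
  fin_cases i <;> fin_cases j <;>
    simp [crossMat, LinearMap.toMatrix'_apply, cross_apply]

section CrossProduct

variable {ι R : Type*} [CommRing R]

theorem sub_cross_sub_swap (p q x : Fin 3 → R) :
    (q - x) ⨯₃ (p - q) = -((p - x) ⨯₃ (q - p)) := by
  have parallel : (p - q) ⨯₃ (p - q) = 0 := cross_self _
  calc (q - x) ⨯₃ (p - q)
      = ((q - x) + (p - q)) ⨯₃ (p - q) := by
        rw [map_add, LinearMap.add_apply, parallel, add_zero]
    _ = (p - x) ⨯₃ -(q - p) := by
        rw [add_comm, sub_add_sub_cancel, neg_sub]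
    _ = -((p - x) ⨯₃ (q - p)) := map_neg _ _

/-- The block matrix of scaled fundamental matrices of cameras with centers `c`: the `3 × 3` block
at `(i, j)` is `u i j • [c j - c i]ₓ`, where `[v]ₓ` is encoded as the matrix of `v ⨯₃ ·`. -/
def crossBlockMatrix (u : ι → ι → R) (c : ι → Fin 3 → R) :
    Matrix (ι × Fin 3) (ι × Fin 3) R :=
  Matrix.of fun p q => (u p.1 q.1 • LinearMap.toMatrix' (crossProduct (c q.1 - c p.1))) p.2 q.2

variable [Fintype ι] (u : ι → ι → R) (c : ι → Fin 3 → R)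

theorem crossBlockMatrix_mulVec_uncurry_apply (w : ι → Fin 3 → R) (i : ι) (k : Fin 3) :
    (crossBlockMatrix u c *ᵥ Function.uncurry w) (i, k) =
      (∑ j, u i j • ((c j - c i) ⨯₃ w j)) k := by
  have block (j : ι) : u i j • ((c j - c i) ⨯₃ w j) =
      (u i j • LinearMap.toMatrix' (crossProduct (c j - c i))) *ᵥ w j := by
    rw [Matrix.smul_mulVec, LinearMap.toMatrix'_mulVec]
  simp only [block, Finset.sum_apply, Matrix.mulVec, dotProduct, Fintype.sum_prod_type,
    crossBlockMatrix, Matrix.of_apply, Function.uncurry_apply_pair]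

variable [DecidableEq ι]

theorem sum_smul_cross_single_add_single (a b i : ι) (α β : R) :
    ∑ j, u i j • ((c j - c i) ⨯₃
        (Pi.single a (α • (c b - c a)) + Pi.single b (β • (c a - c b)) : ι → Fin 3 → R) j) =
      (u i a * α - u i b * β) • ((c a - c i) ⨯₃ (c b - c a)) := by
  have cross_single (e : ι) (x : Fin 3 → R) :
      ∑ j, u i j • ((c j - c i) ⨯₃ (Pi.single e x : ι → Fin 3 → R) j) =
        u i e • ((c e - c i) ⨯₃ x) := by
    rw [Fintype.sum_eq_single e fun j hj => by rw [Pi.single_eq_of_ne hj, map_zero, smul_zero],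
      Pi.single_eq_same]
  simp only [Pi.add_apply, map_add, smul_add, Finset.sum_add_distrib, cross_single, map_smul]
  rw [sub_cross_sub_swap (c a) (c b) (c i)]
  module

theorem crossBlockMatrix_mulVec_single_add_single_eq_zero {a b : ι} {α β : R}
    (h : ∀ i, i ≠ a → i ≠ b → u i a * α = u i b * β) :
    crossBlockMatrix u c *ᵥ Function.uncurry
      (Pi.single a (α • (c b - c a)) + Pi.single b (β • (c a - c b))) = 0 := by
  ext ⟨i, k⟩
  rw [crossBlockMatrix_mulVec_uncurry_apply, sum_smul_cross_single_add_single]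
  suffices (u i a * α - u i b * β) • ((c a - c i) ⨯₃ (c b - c a)) = 0 from congrFun this k
  obtain rfl | hia := eq_or_ne i a
  · rw [sub_self, map_zero, LinearMap.zero_apply, smul_zero]
  obtain rfl | hib := eq_or_ne i b
  · rw [← neg_sub (c i) (c a), map_neg, LinearMap.neg_apply, cross_self, neg_zero, smul_zero]
  · rw [h i hia hib, sub_self, zero_smul]

end CrossProduct

theorem stmt8_general {R : Type*} [CommRing R] (u : Fin 3 → Fin 3 → R)
    (hu : ∀ i j, u i j = u j i) (c : Fin 3 → Fin 3 → R) :
    crossBlockMatrix u c *ᵥ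
        Function.uncurry ![u 1 2 • (c 1 - c 0), u 0 2 • (c 0 - c 1), 0] = 0 ∧
      crossBlockMatrix u c *ᵥ
        Function.uncurry ![u 1 2 • (c 2 - c 0), 0, u 0 1 • (c 0 - c 2)] = 0 ∧
      crossBlockMatrix u c *ᵥ
        Function.uncurry ![0, u 0 2 • (c 2 - c 1), u 0 1 • (c 1 - c 2)] = 0 := by
  have blocks₀₁ (x y : Fin 3 → R) : ![x, y, 0] = Pi.single 0 x + Pi.single 1 y := by
    ext i; fin_cases i <;> simp
  have blocks₀₂ (x y : Fin 3 → R) : ![x, 0, y] = Pi.single 0 x + Pi.single 2 y := by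
    ext i; fin_cases i <;> simp
  have blocks₁₂ (x y : Fin 3 → R) : ![0, x, y] = Pi.single 1 x + Pi.single 2 y := by
    ext i; fin_cases i <;> simp
  rw [blocks₀₁, blocks₀₂, blocks₁₂]
  refine ⟨?_, ?_, ?_⟩ <;>
    refine crossBlockMatrix_mulVec_single_add_single_eq_zero u c fun i hia hib => ?_
  · obtain rfl : i = 2 := by omega
    rw [hu 2 0, hu 2 1, mul_comm]
  · obtain rfl : i = 1 := by omega
    rw [hu 1 0, mul_comm]
  · obtain rfl : i = 0 := by omega
    exact mul_comm _ _

/-- The kernel vectors (2.14) of the 9×9 matrix of scaled hat matrices of the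
camera centers. Indices are 0-based: camera `i+1` of the paper is camera `i` here,
so `u 1 2 = u_23`, `u 0 2 = u_13`, `u 0 1 = u_12`. -/
theorem stmt8 (c : Fin 3 → Fin 3 → ℂ)
    (u : Fin 3 → Fin 3 → ℂ) (hu : ∀ i j, u i j = u j i)
    (M : Matrix (Fin 3 × Fin 3) (Fin 3 × Fin 3) ℂ)
    (hM : ∀ p q, M p q = (u p.1 q.1 • crossMat (c q.1 - c p.1)) p.2 q.2)
    (v₁ v₂ v₃ : Fin 3 × Fin 3 → ℂ)
    (hv₁ : v₁ = fun p => ![u 1 2 • (c 1 - c 0), u 0 2 • (c 0 - c 1), 0] p.1 p.2)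
    (hv₂ : v₂ = fun p => ![u 1 2 • (c 2 - c 0), 0, u 0 1 • (c 0 - c 2)] p.1 p.2)
    (hv₃ : v₃ = fun p => ![0, u 0 2 • (c 2 - c 1), u 0 1 • (c 1 - c 2)] p.1 p.2) :
    M *ᵥ v₁ = 0 ∧ M *ᵥ v₂ = 0 ∧ M *ᵥ v₃ = 0 := by
  obtain rfl : M = crossBlockMatrix u c := by
    ext p q; rw [hM, crossMat_eq_toMatrix'_crossProduct, crossBlockMatrix, Matrix.of_apply]
  subst hv₁ hv₂ hv₃
  exact stmt8_general u hu c
end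

section
/- Let c_1, c_2, c_3 ∈ ℂ³ be such that c_2 − c_1 and c_3 − c_1 are linearly independent, and let u_12, u_13, u_23 ∈ ℂ be nonzero. Then the three vectors of ℂ⁹ written in blocks as v₁ = (u_23 • (c_2 − c_1), u_13 • (c_1 − c_2), 0), v₂ = (u_23 • (c_3 − c_1), 0, u_12 • (c_1 − c_3)), v₃ = (0, u_13 • (c_3 − c_2), u_12 • (c_2 − c_3)) are linearly independent over ℂ. -/
open Matrix

/-! Two of the three blocks suffice. With `x = c 1 - c 0` and `y = c 2 - c 0`, the first two blocks
of the kernel vectors are, up to the scalings, `(x, -x)`, `(y, 0)` and `(0, y - x)`. A vanishing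
combination with coefficients `g` gives `g 0 • x + g 1 • y = 0` in the first block, hence
`g 0 = g 1 = 0`, and `-(g 0 + g 2) • x + g 2 • y = 0` in the second, hence `g 2 = 0`. -/

section Ring

variable {R M : Type*} [Ring R] [AddCommGroup M] [Module R M]

theorem linearIndependent_prod_triple_of_pair {x y : M} (hxy : LinearIndependent R ![x, y]) :
    LinearIndependent R ![(x, -x), (y, 0), (0, y - x)] := by
  rw [LinearIndependent.pair_iff] at hxy
  refine Fintype.linearIndependent_iff.2 fun g hg => ?_
  simp only [Fin.sum_univ_three, cons_val, Prod.smul_mk, Prod.mk_add_mk, Prod.mk_eq_zero] at hg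
  obtain ⟨hfst, hsnd⟩ := hg
  obtain ⟨hg₀, hg₁⟩ : g 0 = 0 ∧ g 1 = 0 := hxy _ _ (by simpa using hfst)
  have hsnd' : -(g 0 + g 2) • x + g 2 • y = 0 := by
    rw [← hsnd, smul_neg, smul_zero, smul_sub, neg_smul, add_smul]
    abel
  have hg₂ : g 2 = 0 := (hxy _ _ hsnd').2
  exact Fin.forall_fin_succ.2 ⟨hg₀, Fin.forall_fin_two.2 ⟨hg₁, hg₂⟩⟩

end Ring

section CommRing

variable {R M N : Type*} [CommRing R] [AddCommGroup M] [Module R M] [AddCommGroup N] [Module R N]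

theorem linearIndependent_prod_smul {ι : Type*} {v : ι → M × N} (hv : LinearIndependent R v)
    {a b : R} (ha : IsSMulRegular M a) (hb : IsSMulRegular N b) :
    LinearIndependent R fun i => (a • (v i).1, b • (v i).2) :=
  hv.map' ((LinearMap.lsmul R M a).prodMap (LinearMap.lsmul R N b)) <|
    LinearMap.ker_eq_bot.2 (Function.Injective.prodMap ha hb)

theorem stmt9_general (c : Fin 3 → M) (hc : LinearIndependent R ![c 1 - c 0, c 2 - c 0])
    (u12 : R) {u13 u23 : R} (hu13 : IsSMulRegular M u13) (hu23 : IsSMulRegular M u23) :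
    LinearIndependent R ![![u23 • (c 1 - c 0), u13 • (c 0 - c 1), 0],
      ![u23 • (c 2 - c 0), 0, u12 • (c 0 - c 2)],
      ![0, u13 • (c 2 - c 1), u12 • (c 1 - c 2)]] := by
  let firstTwoBlocks : (Fin 3 → M) →ₗ[R] M × M := (LinearMap.proj 0).prod (LinearMap.proj 1)
  refine LinearIndependent.of_comp firstTwoBlocks ?_
  convert linearIndependent_prod_smul (linearIndependent_prod_triple_of_pair hc) hu23 hu13 using 1
  ext i : 1
  fin_cases i <;> simp [firstTwoBlocks]

end CommRing

/-- If the camera centers are noncollinear and the scalings are nonzero, the three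
kernel vectors (2.14) are linearly independent over ℂ.
Indices are 0-based: camera `i+1` of the paper is camera `i` here. -/
theorem stmt9 (c : Fin 3 → Fin 3 → ℂ)
    (hc : LinearIndependent ℂ ![c 1 - c 0, c 2 - c 0])
    (u12 u13 u23 : ℂ) (hu12 : u12 ≠ 0) (hu13 : u13 ≠ 0) (hu23 : u23 ≠ 0)
    (v₁ v₂ v₃ : Fin 3 × Fin 3 → ℂ)
    (hv₁ : v₁ = fun p => ![u23 • (c 1 - c 0), u13 • (c 0 - c 1), 0] p.1 p.2)
    (hv₂ : v₂ = fun p => ![u23 • (c 2 - c 0), 0, u12 • (c 0 - c 2)] p.1 p.2)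
    (hv₃ : v₃ = fun p => ![0, u13 • (c 2 - c 1), u12 • (c 1 - c 2)] p.1 p.2) :
    LinearIndependent ℂ ![v₁, v₂, v₃] := by
  subst hv₁ hv₂ hv₃
  refine LinearIndependent.of_comp (LinearEquiv.curry ℂ ℂ (Fin 3) (Fin 3)).toLinearMap ?_
  -- Unlike `f ∘ ![a, b, c]`, `FinVec.map f ![a, b, c]` is definitionally `![f a, f b, f c]`.
  rw [← FinVec.map_eq]
  exact stmt9_general c hc u12 (.of_ne_zero hu13) (.of_ne_zero hu23)
end

section
/- Let R be a 3×3 complex matrix with R * Rᵀ = 1 and let c ∈ ℂ³. Then the essential matrix E = [c]_× * Rᵀ satisfies the Demazure cubics: 2 • (E * Eᵀ * E) − trace(E * Eᵀ) • E = 0. -/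
open Matrix

/-!
Write `Ω` for the matrix of `c ⨯₃ ·`, which is skew-symmetric. The expansion of `c ⨯₃ (c ⨯₃ v)`
gives `Ω * Ωᵀ = (c ⬝ᵥ c) • 1 - c cᵀ`, of trace `2 * (c ⬝ᵥ c)`. Since `cᵀ Ω = 0`, also
`Ω * Ωᵀ * Ω = (c ⬝ᵥ c) • Ω`, so `Ω` satisfies the Demazure cubics. These are equivariant under
right multiplication by orthogonal matrices.
-/

section DemazureCubic

variable {K l m n : Type*} [CommRing K] [Fintype l] [Fintype n]

theorem mul_mul_transpose_of_mul_transpose_eq_one [DecidableEq n] (A : Matrix m n K)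
    {Q : Matrix n l K} (hQ : Q * Qᵀ = 1) : A * Q * (A * Q)ᵀ = A * Aᵀ := by
  rw [transpose_mul, Matrix.mul_assoc, ← Matrix.mul_assoc Q, hQ, Matrix.one_mul]

variable [Fintype m]

/-- The matrix of Demazure cubics of `A`, which vanishes when `A` is an essential matrix; a
rectangular `A` is allowed. -/
def demazureCubic (A : Matrix m n K) : Matrix m n K :=
  2 • (A * Aᵀ * A) - (A * Aᵀ).trace • A

theorem demazureCubic_mul_of_mul_transpose_eq_one [DecidableEq n] (A : Matrix m n K)
    {Q : Matrix n l K} (hQ : Q * Qᵀ = 1) : demazureCubic (A * Q) = demazureCubic A * Q := by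
  simp only [demazureCubic, mul_mul_transpose_of_mul_transpose_eq_one A hQ, Matrix.sub_mul,
    Matrix.smul_mul, Matrix.mul_assoc]

end DemazureCubic

section CrossProductMatrix

variable {K : Type*} [CommRing K]

/-- The matrix `[c]ₓ` of the linear map `v ↦ c ⨯₃ v`, over an arbitrary commutative ring. -/
def crossProductMatrix (c : Fin 3 → K) : Matrix (Fin 3) (Fin 3) K :=
  LinearMap.toMatrix' (crossProduct c)

theorem crossProductMatrix_eq_of (c : Fin 3 → K) :
    crossProductMatrix c = !![0, -c 2, c 1; c 2, 0, -c 0; -c 1, c 0, 0] := by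
  ext i j
  fin_cases i <;> fin_cases j <;>
    simp [crossProductMatrix, LinearMap.toMatrix'_apply, cross_apply]

theorem crossProductMatrix_mulVec (c v : Fin 3 → K) : crossProductMatrix c *ᵥ v = c ⨯₃ v :=
  LinearMap.toMatrix'_mulVec _ v

theorem transpose_crossProductMatrix (c : Fin 3 → K) :
    (crossProductMatrix c)ᵀ = -crossProductMatrix c := by
  ext i j
  fin_cases i <;> fin_cases j <;> simp [crossProductMatrix_eq_of]

theorem crossProductMatrix_mul_transpose (c : Fin 3 → K) :
    crossProductMatrix c * (crossProductMatrix c)ᵀ = (c ⬝ᵥ c) • 1 - vecMulVec c c := by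
  refine ext_of_mulVec_single fun i => ?_
  rw [transpose_crossProductMatrix, Matrix.mul_neg, neg_mulVec, ← mulVec_mulVec,
    crossProductMatrix_mulVec, crossProductMatrix_mulVec, cross_cross_eq_smul_sub_smul',
    sub_mulVec, smul_mulVec, one_mulVec, vecMulVec_mulVec, op_smul_eq_smul, neg_sub]

theorem trace_crossProductMatrix_mul_transpose (c : Fin 3 → K) :
    (crossProductMatrix c * (crossProductMatrix c)ᵀ).trace = 2 * (c ⬝ᵥ c) := by
  rw [crossProductMatrix_mul_transpose, trace_sub, trace_smul, trace_one, trace_vecMulVec,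
    Fintype.card_fin, smul_eq_mul]
  push_cast
  ring

theorem vecMul_crossProductMatrix_self (c : Fin 3 → K) : c ᵥ* crossProductMatrix c = 0 := by
  rw [← mulVec_transpose, transpose_crossProductMatrix, neg_mulVec, crossProductMatrix_mulVec,
    cross_self, neg_zero]

theorem crossProductMatrix_mul_transpose_mul_self (c : Fin 3 → K) :
    crossProductMatrix c * (crossProductMatrix c)ᵀ * crossProductMatrix c =
      (c ⬝ᵥ c) • crossProductMatrix c := by
  rw [crossProductMatrix_mul_transpose, Matrix.sub_mul, Matrix.smul_mul, Matrix.one_mul,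
    vecMulVec_mul, vecMul_crossProductMatrix_self, vecMulVec_zero, sub_zero]

theorem demazureCubic_crossProductMatrix (c : Fin 3 → K) :
    demazureCubic (crossProductMatrix c) = 0 := by
  rw [demazureCubic, crossProductMatrix_mul_transpose_mul_self,
    trace_crossProductMatrix_mul_transpose, mul_smul, two_smul K, two_nsmul, sub_self]

end CrossProductMatrix

theorem stmt11_general {K n : Type*} [CommRing K] [Fintype n] (R : Matrix n (Fin 3) K)
    (hR : Rᵀ * R = 1) (c : Fin 3 → K) (E : Matrix (Fin 3) n K)
    (hE : E = crossProductMatrix c * Rᵀ) :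
    2 • (E * Eᵀ * E) - (E * Eᵀ).trace • E = 0 := by
  change demazureCubic E = 0
  rw [hE, demazureCubic_mul_of_mul_transpose_eq_one _ (by rwa [transpose_transpose]),
    demazureCubic_crossProductMatrix, Matrix.zero_mul]

/-- The Demazure cubics hold for every essential matrix `E = [c]ₓ Rᵀ`. -/
theorem stmt11 (R : Matrix (Fin 3) (Fin 3) ℂ) (hR : R * Rᵀ = 1) (c : Fin 3 → ℂ)
    (E : Matrix (Fin 3) (Fin 3) ℂ) (hE : E = crossMat c * Rᵀ) :
    2 • (E * Eᵀ * E) - (E * Eᵀ).trace • E = 0 :=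
  stmt11_general R (mul_eq_one_comm.mp hR) c E (by rw [hE, crossMat, crossProductMatrix_eq_of])
end

section
/- Let R_1, R_2, R_3 be complex rotations and c_1, c_2, c_3 ∈ ℂ³, with essential matrices E_ij = R_i * [c_j − c_i]_× * (R_j)ᵀ for all i ≠ j (so E_ji = (E_ij)ᵀ). Then trace(E_12 * E_23 * E_31) = 0. -/
open Matrix

/-!
Since `Rⱼᵀ Rⱼ = 1`, the rotations cancel inside the trace and `trace (E₁₂ E₂₃ E₃₁)` equals
`trace (A B C)`, where `A`, `B`, `C` are the cross-product matrices of the sides of the triangle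
of centers. These are alternating and sum to zero, so
`trace (A B C) = -trace (A² B) - trace (B² A)`, and both terms vanish because a symmetric and an
alternating matrix are orthogonal for the trace form.
-/

/-- An alternating matrix: skew-symmetric with zero diagonal. The diagonal condition follows from
skew-symmetry only where `2` is not a zero divisor; requiring it makes the theory
characteristic-free. -/
structure IsAlternating {n K : Type*} [Ring K] (A : Matrix n n K) : Prop where
  transpose_eq_neg : Aᵀ = -A
  diag_eq_zero : A.diag = 0

namespace IsAlternating

variable {n K : Type*}

theorem sub [Ring K] {A B : Matrix n n K} (hA : IsAlternating A) (hB : IsAlternating B) :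
    IsAlternating (A - B) where
  transpose_eq_neg := by
    rw [transpose_sub, hA.transpose_eq_neg, hB.transpose_eq_neg, neg_sub_neg, neg_sub]
  diag_eq_zero := by rw [diag_sub, hA.diag_eq_zero, hB.diag_eq_zero, sub_zero]

theorem isSymm_mul_self [Fintype n] [CommRing K] {A : Matrix n n K} (hA : IsAlternating A) :
    (A * A).IsSymm := by
  rw [IsSymm, transpose_mul, hA.transpose_eq_neg, neg_mul_neg]

theorem trace_mul_eq_zero_of_isSymm [Fintype n] [Ring K] {S A : Matrix n n K}
    (hA : IsAlternating A) (hS : S.IsSymm) : (S * A).trace = 0 := by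
  have swap_entry (i j : n) : A j i = -A i j := congr_fun₂ hA.transpose_eq_neg i j
  have diag_entry (i : n) : A i i = 0 := congr_fun hA.diag_eq_zero i
  simp only [trace, diag_apply, mul_apply, ← Fintype.sum_prod_type']
  refine Finset.sum_involution (fun p _ ↦ p.swap) ?_ ?_ (fun _ _ ↦ Finset.mem_univ _)
    (fun p _ ↦ p.swap_swap)
  · rintro ⟨i, j⟩ -
    rw [Prod.fst_swap, Prod.snd_swap, hS.apply, swap_entry i j, mul_neg, neg_add_cancel]
  · rintro ⟨i, j⟩ - hne hswap
    obtain rfl : j = i := congr_arg Prod.fst hswap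
    exact hne (by rw [diag_entry, mul_zero])

theorem trace_mul_mul_eq_zero_of_add_eq_zero [Fintype n] [CommRing K] {A B C : Matrix n n K}
    (hA : IsAlternating A) (hB : IsAlternating B) (hsum : A + B + C = 0) :
    (A * B * C).trace = 0 := by
  have hABA : (A * B * A).trace = 0 := by
    rw [trace_mul_cycle, hB.trace_mul_eq_zero_of_isSymm hA.isSymm_mul_self]
  have hABB : (A * B * B).trace = 0 := by
    rw [Matrix.mul_assoc, trace_mul_comm, hA.trace_mul_eq_zero_of_isSymm hB.isSymm_mul_self]
  rw [← neg_eq_of_add_eq_zero_right hsum, mul_neg, trace_neg, mul_add, trace_add, hABA, hABB,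
    add_zero, neg_zero]

end IsAlternating

theorem trace_mul_mul_of_mul_eq_one {m n K : Type*} [Fintype m] [Fintype n] [DecidableEq n]
    [CommRing K] {P₁ P₂ P₃ : Matrix m n K} {Q₁ Q₂ Q₃ : Matrix n m K} (h₁ : Q₁ * P₁ = 1)
    (h₂ : Q₂ * P₂ = 1) (h₃ : Q₃ * P₃ = 1) (A B C : Matrix n n K) :
    ((P₁ * A * Q₂) * (P₂ * B * Q₃) * (P₃ * C * Q₁)).trace = (A * B * C).trace :=
  calc ((P₁ * A * Q₂) * (P₂ * B * Q₃) * (P₃ * C * Q₁)).trace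
      = (P₁ * (A * (Q₂ * P₂) * B * (Q₃ * P₃) * C * Q₁)).trace := by simp only [Matrix.mul_assoc]
    _ = (P₁ * (A * B * C * Q₁)).trace := by rw [h₂, h₃, Matrix.mul_one, Matrix.mul_one]
    _ = (A * B * C).trace := by rw [trace_mul_comm, Matrix.mul_assoc, h₁, Matrix.mul_one]

theorem isAlternating_crossMat (v : Fin 3 → ℂ) : IsAlternating (crossMat v) where
  transpose_eq_neg := by
    ext i j
    fin_cases i <;> fin_cases j <;> simp [crossMat]
  diag_eq_zero := by
    ext i
    fin_cases i <;> rfl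

theorem crossMat_sub (v w : Fin 3 → ℂ) : crossMat (v - w) = crossMat v - crossMat w := by
  ext i j
  fin_cases i <;> fin_cases j <;> simp [crossMat] <;> ring

theorem stmt12_general {ι n K : Type*} [Fintype n] [DecidableEq n] [CommRing K]
    (R A : ι → Matrix n n K) (hR : ∀ i, R i * (R i)ᵀ = 1) (hA : ∀ i, IsAlternating (A i))
    (E : ι → ι → Matrix n n K) (hE : ∀ i j, E i j = R i * (A j - A i) * (R j)ᵀ) (i j k : ι) :
    (E i j * E j k * E k i).trace = 0 := by
  have hR' (l : ι) : (R l)ᵀ * R l = 1 := mul_eq_one_comm.mp (hR l)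
  have hsum : (A j - A i) + (A k - A j) + (A i - A k) = 0 := by abel
  rw [hE, hE, hE, trace_mul_mul_of_mul_eq_one (hR' i) (hR' j) (hR' k)]
  exact ((hA j).sub (hA i)).trace_mul_mul_eq_zero_of_add_eq_zero ((hA k).sub (hA j)) hsum

/-- Martyushev's cubic constraint (2.16): `trace(E_12 E_23 E_31) = 0` for compatible
essential matrix triples. Indices are 0-based: camera `i+1` of the paper is
camera `i` here. -/
theorem stmt12 (R : Fin 3 → Matrix (Fin 3) (Fin 3) ℂ) (c : Fin 3 → Fin 3 → ℂ)
    (hR : ∀ i, R i * (R i)ᵀ = 1) (hdR : ∀ i, (R i).det = 1)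
    (E : Fin 3 → Fin 3 → Matrix (Fin 3) (Fin 3) ℂ)
    (hE : ∀ i j, E i j = R i * crossMat (c j - c i) * (R j)ᵀ) :
    (E 0 1 * E 1 2 * E 2 0).trace = 0 :=
  stmt12_general R (fun i ↦ crossMat (c i)) hR (fun i ↦ isAlternating_crossMat (c i)) E
    (fun i j ↦ by rw [hE, crossMat_sub]) 0 1 2
end

section
/- Let A, B, C be 3×3 complex matrices satisfying Aᵀ * A * B − (1/2 : ℂ) * trace(Aᵀ * A) • B + adj(A) * Cᵀ = 0. Then the matrix C * adj(A)ᵀ * B is symmetric: (C * adj(A)ᵀ * B)ᵀ = C * adj(A)ᵀ * B. -/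
open Matrix

section Symmetric

variable {l m n R : Type*} [Fintype m]

theorem isSymm_transpose_mul_mul [NonUnitalCommSemiring R] {S : Matrix m m R} (hS : S.IsSymm)
    (B : Matrix m n R) : (Bᵀ * S * B).IsSymm := by
  rw [IsSymm, transpose_mul, transpose_mul, transpose_transpose, hS.eq, Matrix.mul_assoc]

theorem stmt18_general [Fintype l] [NonUnitalCommRing R] {S : Matrix m m R} {B : Matrix m n R}
    {C : Matrix n l R} {D : Matrix m l R} (hS : S.IsSymm) (h : S * B + D * Cᵀ = 0) :
    (C * Dᵀ * B).IsSymm := by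
  have hDC : D * Cᵀ = -(S * B) := eq_neg_of_add_eq_zero_right h
  have hCD : C * Dᵀ = -(Bᵀ * S) := by
    simpa only [transpose_mul, transpose_neg, transpose_transpose, hS.eq] using
      congrArg transpose hDC
  rw [hCD, Matrix.neg_mul]
  exact (isSymm_transpose_mul_mul hS B).neg

end Symmetric

/-- Remark 3.6: if `Aᵀ A B − (1/2) tr(Aᵀ A) B + adj(A) Cᵀ = 0`, then
`C adj(A)ᵀ B` is symmetric. -/
theorem stmt18 (A B C : Matrix (Fin 3) (Fin 3) ℂ)
    (h : Aᵀ * A * B - ((1 / 2 : ℂ) * (Aᵀ * A).trace) • B + A.adjugate * Cᵀ = 0) :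
    (C * A.adjugateᵀ * B)ᵀ = C * A.adjugateᵀ * B := by
  have hS : (Aᵀ * A - ((1 / 2 : ℂ) * (Aᵀ * A).trace) • 1).IsSymm :=
    (isSymm_transpose_mul_self A).sub (isSymm_one.smul _)
  exact stmt18_general hS (by rwa [Matrix.sub_mul, smul_mul, Matrix.one_mul])
end
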